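/- For every Δ ∈ {≤, =}, the family of linear context-free languages L(LIN) coincides with the family L_1(CF) of context-free languages of index 1 and with the family L(CD_2, CF[−λ], (t∧Δ1)) of languages generated by CD grammar systems with at most two context-free components working in the (t∧Δ1)-mode, both with and without erasing rules. -/

import Mathlib

namespace CDHybrid

/-- Symbols: nonterminals are natural numbers, terminals come from `T`. -/
abbrev Symb (T : Type) := ℕ ⊕ T

/-- Sentential forms. -/
abbrev SForm (T : Type) := List (Symb T)

/-- A context-free rule `A → z`. -/
abbrev Rule (T : Type) := ℕ × SForm T

/-- Number of nonterminal occurrences in a sentential form. -/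
def ntCount {T : Type} (x : SForm T) : ℕ := (x.filter Sum.isLeft).length

/-- One rewriting step using some rule of the rule set `P`. -/
def RStep {T : Type} (P : List (Rule T)) (x y : SForm T) : Prop :=
  ∃ r ∈ P, ∃ u v : SForm T, x = u ++ Sum.inl r.1 :: v ∧ y = u ++ r.2 ++ v

/-- `m`-step derivation using only rules of `P`. -/
def StepsN {T : Type} (P : List (Rule T)) : ℕ → SForm T → SForm T → Prop
  | 0, x, y => x = y
  | m + 1, x, y => ∃ z, RStep P x z ∧ StepsN P m z y

/-- `m`-step derivation using only rules of `P`, all intermediate (and the final)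
sentential forms having at most `b` occurrences of nonterminals. -/
def StepsNB {T : Type} (P : List (Rule T)) (b : ℕ) : ℕ → SForm T → SForm T → Prop
  | 0, x, y => x = y
  | m + 1, x, y => ∃ z, RStep P x z ∧ ntCount z ≤ b ∧ StepsNB P b m z y

/-- Derivation modes of CD grammar systems. -/
inductive Mode where
  | eq : ℕ → Mode
  | le : ℕ → Mode
  | ge : ℕ → Mode
  | star : Mode
  | t : Mode
  | conj : Mode → Mode → Mode

/-- The predicate of a derivation mode: `modeOK P f m y` holds if an `m`-step
derivation by the component `P` ending in `y` is acceptable for mode `f`. -/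
def modeOK {T : Type} (P : List (Rule T)) : Mode → ℕ → SForm T → Prop
  | .eq k, m, _ => m = k
  | .le k, m, _ => m ≤ k
  | .ge k, m, _ => k ≤ m
  | .star, _, _ => True
  | .t, _, y => ¬ ∃ z, RStep P y z
  | .conj f g, m, y => modeOK P f m y ∧ modeOK P g m y

/-- A CD grammar system with context-free components. -/
structure CDGS (T : Type) where
  deg : ℕ
  start : ℕ
  comp : Fin deg → List (Rule T)

/-- λ-freeness: no erasing rules. -/
def CDGS.LamFree {T : Type} (G : CDGS T) : Prop :=
  ∀ i : Fin G.deg, ∀ r ∈ G.comp i, r.2 ≠ []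

/-- One derivation step of a component of `G` in mode `f`. -/
def CDGS.ModeStep {T : Type} (G : CDGS T) (f : Mode) (x y : SForm T) : Prop :=
  ∃ i : Fin G.deg, ∃ m : ℕ, StepsN (G.comp i) m x y ∧ modeOK (G.comp i) f m y

/-- One derivation step of a component of `G` in mode `f`, with all produced
sentential forms having at most `b` nonterminal occurrences. -/
def CDGS.ModeStepB {T : Type} (G : CDGS T) (f : Mode) (b : ℕ) (x y : SForm T) : Prop :=
  ∃ i : Fin G.deg, ∃ m : ℕ, StepsNB (G.comp i) b m x y ∧ modeOK (G.comp i) f m y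

/-- The language generated by `G` in mode `f`. -/
def CDGS.lang {T : Type} (G : CDGS T) (f : Mode) : Set (List T) :=
  { w | Relation.TransGen (G.ModeStep f) [Sum.inl G.start] (w.map Sum.inr) }

/-- The words of the language of `G` in mode `f` possessing a derivation of index
at most `b`, i.e., all sentential forms occurring in it have at most `b`
nonterminal occurrences. -/
def CDGS.langB {T : Type} (G : CDGS T) (f : Mode) (b : ℕ) : Set (List T) :=
  { w | ntCount ([Sum.inl G.start] : SForm T) ≤ b ∧
      Relation.TransGen (G.ModeStepB f b) [Sum.inl G.start] (w.map Sum.inr) }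

/-- Two languages are considered equal iff they differ at most in the empty word. -/
def EqL {T : Type} (L₁ L₂ : Set (List T)) : Prop := L₁ \ {[]} = L₂ \ {[]}

/-- The family `L(CD_n, CF[−λ], f)`; `lf = true` forbids erasing rules. -/
def CDFam (T : Type) (lf : Bool) (n : ℕ) (f : Mode) : Set (Set (List T)) :=
  { L | ∃ G : CDGS T, G.deg ≤ n ∧ (lf = true → G.LamFree) ∧ EqL (G.lang f) L }

/-- The family `L(CD_∞, CF[−λ], f)`. -/
def CDFamInf (T : Type) (lf : Bool) (f : Mode) : Set (Set (List T)) :=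
  { L | ∃ G : CDGS T, (lf = true → G.LamFree) ∧ EqL (G.lang f) L }

/-- The family `L_m(CD_n, CF[−λ], f)` of such languages of index at most `m`. -/
def CDFamInd (T : Type) (lf : Bool) (n : ℕ) (f : Mode) (m : ℕ) : Set (Set (List T)) :=
  { L | ∃ G : CDGS T, G.deg ≤ n ∧ (lf = true → G.LamFree) ∧ EqL (G.lang f) L ∧
      G.lang f ⊆ G.langB f m }

/-- The family `L_m(CD_∞, CF[−λ], f)`. -/
def CDFamIndInf (T : Type) (lf : Bool) (f : Mode) (m : ℕ) : Set (Set (List T)) :=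
  { L | ∃ G : CDGS T, (lf = true → G.LamFree) ∧ EqL (G.lang f) L ∧ G.lang f ⊆ G.langB f m }

/-- The family `L_fin(CD_∞, CF[−λ], f)`. -/
def CDFamFinInf (T : Type) (lf : Bool) (f : Mode) : Set (Set (List T)) :=
  { L | ∃ m : ℕ, 1 ≤ m ∧ L ∈ CDFamIndInf T lf f m }

/-- A context-free grammar. -/
structure CFG (T : Type) where
  start : ℕ
  rules : List (Rule T)

/-- The language generated by a context-free grammar. -/
def CFG.lang {T : Type} (G : CFG T) : Set (List T) :=
  { w | Relation.ReflTransGen (RStep G.rules) [Sum.inl G.start] (w.map Sum.inr) }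

/-- The words of `G.lang` having a derivation of index at most `m`. -/
def CFG.langB {T : Type} (G : CFG T) (m : ℕ) : Set (List T) :=
  { w | ntCount ([Sum.inl G.start] : SForm T) ≤ m ∧
      Relation.ReflTransGen (fun x y => RStep G.rules x y ∧ ntCount y ≤ m)
        [Sum.inl G.start] (w.map Sum.inr) }

/-- The family `L(CF)` of context-free languages. -/
def CFFam (T : Type) : Set (Set (List T)) := { L | ∃ G : CFG T, EqL G.lang L }

/-- The family `L_m(CF)` of context-free languages of index at most `m`. -/
def CFFamInd (T : Type) (m : ℕ) : Set (Set (List T)) :=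
  { L | ∃ G : CFG T, EqL G.lang L ∧ G.lang ⊆ G.langB m }

/-- The family `L_fin(CF)` of context-free languages of finite index. -/
def CFFamFin (T : Type) : Set (Set (List T)) :=
  { L | ∃ m : ℕ, 1 ≤ m ∧ L ∈ CFFamInd T m }

/-- A grammar is linear if every right-hand side contains at most one nonterminal. -/
def CFG.Linear {T : Type} (G : CFG T) : Prop := ∀ r ∈ G.rules, ntCount r.2 ≤ 1

/-- The family `L(LIN)` of linear context-free languages. -/
def LinFam (T : Type) : Set (Set (List T)) :=
  { L | ∃ G : CFG T, G.Linear ∧ EqL G.lang L }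

/-- The family `L(FIN)` of finite languages. -/
def FinFam (T : Type) : Set (Set (List T)) := { L | L.Finite }

/-- A programmed grammar with context-free rules. -/
structure PG (T : Type) where
  start : ℕ
  nLab : ℕ
  rule : Fin nLab → Rule T
  succ : Fin nLab → Set (Fin nLab)
  fail : Fin nLab → Set (Fin nLab)

def PG.LamFree {T : Type} (G : PG T) : Prop := ∀ r : Fin G.nLab, (G.rule r).2 ≠ []

/-- No appearance checking: all failure fields are empty. -/
def PG.NoAC {T : Type} (G : PG T) : Prop := ∀ r : Fin G.nLab, G.fail r = ∅

/-- One step of a programmed grammar on pairs (sentential form, label). -/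
def PG.PStep {T : Type} (G : PG T) (p q : SForm T × Fin G.nLab) : Prop :=
  (∃ u v : SForm T, p.1 = u ++ Sum.inl (G.rule p.2).1 :: v ∧
      q.1 = u ++ (G.rule p.2).2 ++ v ∧ q.2 ∈ G.succ p.2) ∨
  (Sum.inl (G.rule p.2).1 ∉ p.1 ∧ q.1 = p.1 ∧ q.2 ∈ G.fail p.2)

/-- The language generated by a programmed grammar. -/
def PG.lang {T : Type} (G : PG T) : Set (List T) :=
  { w | ∃ r₁ r₂ : Fin G.nLab,
      Relation.ReflTransGen G.PStep ([Sum.inl G.start], r₁) (w.map Sum.inr, r₂) }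

/-- The words of `G.lang` having a derivation of index at most `m`. -/
def PG.langB {T : Type} (G : PG T) (m : ℕ) : Set (List T) :=
  { w | ∃ r₁ r₂ : Fin G.nLab, ntCount ([Sum.inl G.start] : SForm T) ≤ m ∧
      Relation.ReflTransGen (fun p q => G.PStep p q ∧ ntCount q.1 ≤ m)
        ([Sum.inl G.start], r₁) (w.map Sum.inr, r₂) }

/-- The family `L_m(P, CF[−λ][, ac])`: programmed languages of index at most `m`;
`ac = false` forbids appearance checking, `lf = true` forbids erasing rules. -/
def PFamInd (T : Type) (lf ac : Bool) (m : ℕ) : Set (Set (List T)) :=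
  { L | ∃ G : PG T, (lf = true → G.LamFree) ∧ (ac = false → G.NoAC) ∧
      EqL G.lang L ∧ G.lang ⊆ G.langB m }

/-- The family `L_fin(P, CF[−λ][, ac])` of programmed languages of finite index. -/
def PFamFin (T : Type) (lf ac : Bool) : Set (Set (List T)) :=
  { L | ∃ m : ℕ, 1 ≤ m ∧ L ∈ PFamInd T lf ac m }

/-! Each of the three families consists of the languages `G.langB 1` of words having a derivation of
index 1 in a context-free grammar `G`, up to the empty word.

A rule with two nonterminals on its right-hand side cannot occur in a derivation of index 1, so
index 1 and linearity agree. For a system with two components, suppose that a component `P`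
produces a sentential form blocking `P` and that the other component `Q` then does the same.
A nonterminal not touched by the second step lies in the domain of neither, so it can never be
rewritten: every sentential form produced in a successful derivation has at most one nonterminal.
The rules that matter are then those whose right-hand side blocks their own component.
Conversely, a linear grammar is simulated by two components that rewrite nonterminals of one
color into nonterminals of the other, after the empty word has been removed from its language. -/

open Relation

section

variable {T : Type} {P : List (Rule T)} {A : ℕ} {u v w : List T} {x y z : SForm T} {m : ℕ}

/-! ### Sentential forms with at most one nonterminal -/

/-- The sentential form `u A v` with exactly one nonterminal `A` between terminal words. -/
def linForm (u : List T) (A : ℕ) (v : List T) : SForm T :=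
  u.map Sum.inr ++ Sum.inl A :: v.map Sum.inr

@[simp]
theorem ntCount_append (x y : SForm T) : ntCount (x ++ y) = ntCount x + ntCount y := by
  simp [ntCount]

@[simp]
theorem ntCount_inl_cons (A : ℕ) (x : SForm T) : ntCount (Sum.inl A :: x) = ntCount x + 1 :=
  rfl

@[simp]
theorem ntCount_map_inr (w : List T) : ntCount (w.map Sum.inr) = 0 := by
  simp [ntCount]

@[simp]
theorem ntCount_linForm (u : List T) (A : ℕ) (v : List T) : ntCount (linForm u A v) = 1 := by
  simp [linForm]

theorem ntCount_eq_zero_iff_forall_notMem : ntCount x = 0 ↔ ∀ A, Sum.inl A ∉ x := by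
  simp [ntCount, List.filter_eq_nil_iff]

theorem ntCount_eq_zero_iff : ntCount x = 0 ↔ ∃ w : List T, x = w.map Sum.inr := by
  refine ⟨fun h => ?_, by rintro ⟨w, rfl⟩; exact ntCount_map_inr w⟩
  rw [ntCount_eq_zero_iff_forall_notMem] at h
  have hx : x ∈ Set.range (List.map Sum.inr) := by
    rw [Set.range_list_map]
    rintro (A | a) ha
    · exact absurd ha (h A)
    · exact ⟨a, rfl⟩
  obtain ⟨w, rfl⟩ := hx
  exact ⟨w, rfl⟩

theorem ntCount_eq_one_iff : ntCount x = 1 ↔ ∃ u A v, x = linForm u A v := by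
  refine ⟨fun h => ?_, by rintro ⟨u, A, v, rfl⟩; exact ntCount_linForm u A v⟩
  obtain ⟨A, hA⟩ : ∃ A, Sum.inl A ∈ x := by
    by_contra! hx
    exact one_ne_zero (h.symm.trans (ntCount_eq_zero_iff_forall_notMem.2 hx))
  obtain ⟨x₁, x₂, rfl⟩ := List.append_of_mem hA
  simp only [ntCount_append, ntCount_inl_cons] at h
  obtain ⟨u, rfl⟩ := ntCount_eq_zero_iff.1 (show ntCount x₁ = 0 by lia)
  obtain ⟨v, rfl⟩ := ntCount_eq_zero_iff.1 (show ntCount x₂ = 0 by lia)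
  exact ⟨u, A, v, rfl⟩

theorem linForm_eq_append_cons_iff {B : ℕ} :
    linForm u A v = x ++ Sum.inl B :: y ↔ u.map Sum.inr = x ∧ A = B ∧ v.map Sum.inr = y := by
  rw [linForm, List.append_cons_inj_of_notMem (by simp) (by simp), Sum.inl.injEq]

/-! ### Derivations of bounded index -/

theorem not_rStep_map_inr : ¬ RStep P (w.map Sum.inr) y := by
  rintro ⟨r, -, x₁, x₂, h, -⟩
  simpa using congrArg ntCount h

theorem RStep.ntCount_le (hP : ∀ r ∈ P, ntCount r.2 ≤ 1) (h : RStep P x y) :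
    ntCount y ≤ ntCount x := by
  obtain ⟨r, hr, x₁, x₂, rfl, rfl⟩ := h
  have := hP r hr
  simp only [ntCount_append, ntCount_inl_cons]
  lia

/-- A rewriting step whose result has at most `m` nonterminals, as in derivations of index `m`. -/
def BoundedStep (P : List (Rule T)) (m : ℕ) (x y : SForm T) : Prop :=
  RStep P x y ∧ ntCount y ≤ m

theorem ntCount_le_of_reflTransGen_boundedStep (hx : ntCount x ≤ m)
    (h : ReflTransGen (BoundedStep P m) x y) : ntCount y ≤ m := by
  obtain rfl | ⟨z, -, hzy⟩ := ReflTransGen.cases_tail h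
  · exact hx
  · exact hzy.2

theorem boundedStep_filter (P : List (Rule T)) (m : ℕ) :
    BoundedStep (P.filter fun r => ntCount r.2 ≤ m) m = BoundedStep P m := by
  ext x y
  constructor
  · rintro ⟨⟨r, hr, h⟩, hy⟩
    exact ⟨⟨r, List.mem_of_mem_filter hr, h⟩, hy⟩
  · rintro ⟨⟨r, hr, x₁, x₂, rfl, rfl⟩, hy⟩
    have hr' : ntCount r.2 ≤ m := by
      simp only [ntCount_append] at hy
      lia
    exact ⟨⟨r, List.mem_filter.2 ⟨hr, by simpa using hr'⟩, x₁, x₂, rfl, rfl⟩, hy⟩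

theorem boundedStep_one_linForm_iff : BoundedStep P 1 (linForm u A v) y ↔
    ∃ z, (A, z) ∈ P ∧ ntCount z ≤ 1 ∧ y = u.map Sum.inr ++ z ++ v.map Sum.inr := by
  constructor
  · rintro ⟨⟨⟨B, z⟩, hr, x₁, x₂, h, rfl⟩, hy⟩
    obtain ⟨rfl, rfl, rfl⟩ := linForm_eq_append_cons_iff.1 h
    exact ⟨z, hr, by simpa using hy, rfl⟩
  · rintro ⟨z, hz, hz1, rfl⟩
    exact ⟨⟨(A, z), hz, _, _, rfl, rfl⟩, by simpa using hz1⟩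

theorem reflTransGen_boundedStep_of_linear (hP : ∀ r ∈ P, ntCount r.2 ≤ 1) (hx : ntCount x ≤ m)
    (h : ReflTransGen (RStep P) x y) : ReflTransGen (BoundedStep P m) x y := by
  induction h with
  | refl => exact .refl
  | tail _ hyz ih =>
    exact ih.tail ⟨hyz, (hyz.ntCount_le hP).trans (ntCount_le_of_reflTransGen_boundedStep hx ih)⟩

namespace CFG

variable {G : CFG T}

theorem mem_langB_iff (hm : 1 ≤ m) : w ∈ G.langB m ↔
    ReflTransGen (BoundedStep G.rules m) [Sum.inl G.start] (w.map Sum.inr) :=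
  and_iff_right hm

theorem langB_subset_lang (G : CFG T) (m : ℕ) : G.langB m ⊆ G.lang :=
  fun _ h => ReflTransGen.mono (fun _ _ hxy => hxy.1) _ _ h.2

theorem Linear.lang_eq_langB_one (hG : G.Linear) : G.lang = G.langB 1 := by
  refine Set.Subset.antisymm (fun w hw => ?_) (G.langB_subset_lang 1)
  exact (mem_langB_iff le_rfl).2 (reflTransGen_boundedStep_of_linear hG le_rfl hw)

/-- The grammar obtained by keeping only the linear rules. -/
def linearPart (G : CFG T) : CFG T where
  start := G.start
  rules := G.rules.filter fun r => ntCount r.2 ≤ 1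

theorem linear_linearPart (G : CFG T) : G.linearPart.Linear :=
  fun _ hr => by simpa using List.of_mem_filter hr

theorem lang_linearPart (G : CFG T) : G.linearPart.lang = G.langB 1 := by
  rw [G.linear_linearPart.lang_eq_langB_one]
  ext w
  rw [mem_langB_iff le_rfl, mem_langB_iff le_rfl, linearPart, boundedStep_filter]

end CFG

theorem mem_linFam_iff {L : Set (List T)} :
    L ∈ LinFam T ↔ ∃ G : CFG T, EqL (G.langB 1) L := by
  constructor
  · rintro ⟨G, hG, hL⟩
    exact ⟨G, hG.lang_eq_langB_one ▸ hL⟩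
  · rintro ⟨G, hL⟩
    exact ⟨G.linearPart, G.linear_linearPart, G.lang_linearPart.symm ▸ hL⟩

theorem mem_cfFamInd_one_iff {L : Set (List T)} :
    L ∈ CFFamInd T 1 ↔ ∃ G : CFG T, EqL (G.langB 1) L := by
  constructor
  · rintro ⟨G, hL, hG⟩
    exact ⟨G, hG.antisymm (G.langB_subset_lang 1) ▸ hL⟩
  · rintro ⟨G, hL⟩
    exact ⟨G.linearPart, G.lang_linearPart.symm ▸ hL,
      G.linear_linearPart.lang_eq_langB_one.subset⟩

/-! ### Linear derivability -/

/-- `LinDerives P A w` states that the nonterminal `A` derives the terminal word `w` by linear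
rules of `P`. The derivation is built from its last step backwards, so that induction on it follows
the nonterminals rather than the sentential forms. -/
inductive LinDerives (P : List (Rule T)) : ℕ → List T → Prop
  | terminal {A : ℕ} {w : List T} (hr : (A, w.map Sum.inr) ∈ P) : LinDerives P A w
  | linear {A B : ℕ} {u v w : List T} (hr : (A, linForm u B v) ∈ P) (hB : LinDerives P B w) :
      LinDerives P A (u ++ w ++ v)

theorem LinDerives.reflTransGen (h : LinDerives P A w) (u v : List T) :
    ReflTransGen (BoundedStep P 1) (linForm u A v) ((u ++ w ++ v).map Sum.inr) := by
  induction h generalizing u v with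
  | @terminal A w hr =>
    exact .single (boundedStep_one_linForm_iff.2 ⟨_, hr, by simp, by simp⟩)
  | @linear A B u' v' w hr _ ih =>
    have hstep : BoundedStep P 1 (linForm u A v) (linForm (u ++ u') B (v' ++ v)) :=
      boundedStep_one_linForm_iff.2 ⟨_, hr, by simp, by simp [linForm]⟩
    simpa only [List.append_assoc] using (ih (u ++ u') (v' ++ v)).head hstep

theorem exists_linDerives_of_reflTransGen
    (h : ReflTransGen (BoundedStep P 1) (linForm u A v) (w.map Sum.inr)) :
    ∃ w', w = u ++ w' ++ v ∧ LinDerives P A w' := by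
  generalize hx : linForm u A v = x at h
  induction h using ReflTransGen.head_induction_on generalizing u A v with
  | refl => simpa using congrArg ntCount hx
  | head hxy hyw ih =>
    subst hx
    obtain ⟨z, hr, hz, rfl⟩ := boundedStep_one_linForm_iff.1 hxy
    obtain hz | hz := Nat.le_one_iff_eq_zero_or_eq_one.1 hz
    · obtain ⟨w', rfl⟩ := ntCount_eq_zero_iff.1 hz
      simp only [← List.map_append] at hyw
      obtain hw | ⟨y, hy, -⟩ := ReflTransGen.cases_head hyw
      · exact ⟨w', (Sum.inr_injective.list_map hw).symm, .terminal hr⟩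
      · exact absurd hy.1 not_rStep_map_inr
    · obtain ⟨u', B, v', rfl⟩ := ntCount_eq_one_iff.1 hz
      obtain ⟨w', rfl, hB⟩ := ih (u := u ++ u') (A := B) (v := v' ++ v) (by simp [linForm])
      exact ⟨u' ++ w' ++ v', by simp only [List.append_assoc], .linear hr hB⟩

theorem CFG.mem_langB_one_iff {G : CFG T} : w ∈ G.langB 1 ↔ LinDerives G.rules G.start w := by
  rw [CFG.mem_langB_iff le_rfl]
  constructor
  · intro h
    obtain ⟨w', rfl, hw'⟩ := exists_linDerives_of_reflTransGen (u := []) (v := []) h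
    simpa only [List.nil_append, List.append_nil] using hw'
  · intro h
    simpa [linForm] using h.reflTransGen [] []

/-! ### Elimination of erasing rules -/

open Classical in
/-- The rules `A → uv` obtained from the rules `A → uBv` of `P` for which `B` derives the empty
word. -/
noncomputable def nullableErasures (P : List (Rule T)) : List (Rule T) :=
  (P.filter fun r => ntCount r.2 = 1 ∧ ∀ B, Sum.inl B ∈ r.2 → LinDerives P B []).map
    fun r => (r.1, r.2.filter Sum.isRight)

theorem mem_nullableErasures_iff : (A, z) ∈ nullableErasures P ↔
    ∃ u B v, (A, linForm u B v) ∈ P ∧ LinDerives P B [] ∧ z = (u ++ v).map Sum.inr := by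
  have hfilter (u : List T) (B : ℕ) (v : List T) :
      (linForm u B v).filter Sum.isRight = (u ++ v).map Sum.inr := by
    simp [linForm, List.filter_map, Function.comp_def]
  simp only [nullableErasures, List.mem_map, List.mem_filter, decide_eq_true_eq, Prod.mk.injEq]
  constructor
  · rintro ⟨⟨A, x⟩, ⟨hr, hx, hB⟩, rfl, rfl⟩
    obtain ⟨u, B, v, rfl⟩ := ntCount_eq_one_iff.1 hx
    exact ⟨u, B, v, hr, hB B (by simp [linForm]), hfilter u B v⟩
  · rintro ⟨u, B, v, hr, hB, rfl⟩
    exact ⟨(A, linForm u B v), ⟨hr, by simp, by simpa [linForm] using hB⟩, rfl, hfilter u B v⟩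

/-- The nonerasing rules among those of `P` and `nullableErasures P`. -/
noncomputable def lamFreeRules (P : List (Rule T)) : List (Rule T) :=
  (P ++ nullableErasures P).filter fun r => !r.2.isEmpty

theorem mem_lamFreeRules_iff {r : Rule T} :
    r ∈ lamFreeRules P ↔ (r ∈ P ∨ r ∈ nullableErasures P) ∧ r.2 ≠ [] := by
  simp [lamFreeRules, or_and_right]

theorem LinDerives.of_lamFreeRules (h : LinDerives (lamFreeRules P) A w) :
    LinDerives P A w ∧ w ≠ [] := by
  induction h with
  | terminal hr =>
    obtain ⟨hr, hw⟩ := mem_lamFreeRules_iff.1 hr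
    refine ⟨?_, by simpa using hw⟩
    obtain hr | hr := hr
    · exact .terminal hr
    · obtain ⟨u, B, v, hr, hB, huv⟩ := mem_nullableErasures_iff.1 hr
      rw [Sum.inr_injective.list_map huv]
      simpa only [List.append_nil] using LinDerives.linear hr hB
  | linear hr _ ih =>
    obtain hr | hr := (mem_lamFreeRules_iff.1 hr).1
    · exact ⟨.linear hr ih.1, by simp [ih.2]⟩
    · obtain ⟨u, B, v, -, -, huv⟩ := mem_nullableErasures_iff.1 hr
      simpa using congrArg ntCount huv

theorem LinDerives.lamFreeRules (h : LinDerives P A w) (hw : w ≠ []) :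
    LinDerives (lamFreeRules P) A w := by
  induction h with
  | terminal hr => exact .terminal (mem_lamFreeRules_iff.2 ⟨.inl hr, by simpa using hw⟩)
  | @linear A B u v w hr hB ih =>
    obtain rfl | hw' := eq_or_ne w []
    · rw [List.append_nil] at hw ⊢
      have herase : (A, (u ++ v).map Sum.inr) ∈ nullableErasures P :=
        mem_nullableErasures_iff.2 ⟨u, B, v, hr, hB, rfl⟩
      exact .terminal (mem_lamFreeRules_iff.2 ⟨.inr herase, by simpa using hw⟩)
    · exact .linear (mem_lamFreeRules_iff.2 ⟨.inl hr, by simp [linForm]⟩) (ih hw')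

/-- The grammar with rules `lamFreeRules`; it loses exactly the empty word. -/
noncomputable def CFG.lamFreePart (G : CFG T) : CFG T where
  start := G.start
  rules := lamFreeRules G.rules

theorem CFG.langB_one_lamFreePart (G : CFG T) : G.lamFreePart.langB 1 = G.langB 1 \ {[]} := by
  ext w
  rw [Set.mem_sdiff, Set.mem_singleton_iff, CFG.mem_langB_one_iff, CFG.mem_langB_one_iff]
  exact ⟨LinDerives.of_lamFreeRules, fun h => h.1.lamFreeRules h.2⟩

/-! ### Systems with two components -/

/-- The set of nonterminals that `P` can rewrite. -/
def dom (P : List (Rule T)) : Set ℕ := {A | ∃ z, (A, z) ∈ P}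

/-- `P` rewrites no nonterminal of `x`: the stopping condition of the `t`-mode. -/
def Blocked (P : List (Rule T)) (x : SForm T) : Prop := ∀ A ∈ dom P, Sum.inl A ∉ x

theorem not_exists_rStep_iff_blocked : (¬ ∃ y, RStep P x y) ↔ Blocked P x := by
  constructor
  · rintro h A ⟨z, hr⟩ hA
    obtain ⟨x₁, x₂, rfl⟩ := List.append_of_mem hA
    exact h ⟨_, (A, z), hr, x₁, x₂, rfl, rfl⟩
  · rintro h ⟨_, r, hr, x₁, x₂, rfl, rfl⟩
    exact h r.1 ⟨r.2, hr⟩ (by simp)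

theorem blocked_append : Blocked P (x ++ y) ↔ Blocked P x ∧ Blocked P y := by
  simp only [Blocked, List.mem_append, not_or, forall_and]

theorem blocked_map_inr (P : List (Rule T)) (w : List T) : Blocked P (w.map Sum.inr) := by
  simp [Blocked]

namespace CDGS

variable {G : CDGS T}

/-- One derivation step of `G` in mode `t ∧ =1`. -/
def TStep (G : CDGS T) (x y : SForm T) : Prop :=
  ∃ i, RStep (G.comp i) x y ∧ Blocked (G.comp i) y

theorem TStep.modeStep {d : ℕ → Mode} (hd : d = Mode.le ∨ d = Mode.eq) (h : G.TStep x y) :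
    G.ModeStep (Mode.conj Mode.t (d 1)) x y := by
  obtain ⟨i, hxy, hy⟩ := h
  refine ⟨i, 1, ⟨y, hxy, rfl⟩, not_exists_rStep_iff_blocked.2 hy, ?_⟩
  obtain rfl | rfl := hd
  · exact le_rfl
  · rfl

theorem ModeStep.reflTransGen_tStep {d : ℕ → Mode} (hd : d = Mode.le ∨ d = Mode.eq)
    (h : G.ModeStep (Mode.conj Mode.t (d 1)) x y) : ReflTransGen G.TStep x y := by
  obtain ⟨i, m, hxy, hy, hm⟩ := h
  have hm : m ≤ 1 := by
    obtain rfl | rfl := hd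
    · exact hm
    · exact le_of_eq hm
  obtain rfl | rfl := Nat.le_one_iff_eq_zero_or_eq_one.1 hm
  · obtain rfl := hxy
    exact .refl
  · obtain ⟨z, hxz, rfl⟩ := hxy
    exact .single ⟨i, hxz, not_exists_rStep_iff_blocked.1 hy⟩

theorem mem_lang_iff_reflTransGen_tStep {d : ℕ → Mode} (hd : d = Mode.le ∨ d = Mode.eq) :
    w ∈ G.lang (Mode.conj Mode.t (d 1)) ↔
      ReflTransGen G.TStep [Sum.inl G.start] (w.map Sum.inr) := by
  constructor
  · intro h
    exact reflTransGen_closed (fun _ _ => ModeStep.reflTransGen_tStep hd) _ _ h.to_reflTransGen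
  · intro h
    obtain hw | h := reflTransGen_iff_eq_or_transGen.1 h
    · simpa using congrArg ntCount hw
    · exact TransGen.mono (fun _ _ => TStep.modeStep hd) _ _ h

theorem inl_notMem_of_forall_notMem_dom (hA : ∀ i, A ∉ dom (G.comp i))
    (h : ReflTransGen G.TStep x (w.map Sum.inr)) : Sum.inl A ∉ x := by
  induction h using ReflTransGen.head_induction_on with
  | refl => simp
  | head hxy _ ih =>
    obtain ⟨i, ⟨r, hr, x₁, x₂, rfl, rfl⟩, -⟩ := hxy
    have hAr : A ≠ r.1 := fun h => hA i ⟨r.2, h ▸ hr⟩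
    simp only [List.mem_append, List.mem_cons, Sum.inl.injEq, hAr, not_or] at ih ⊢
    tauto

theorem ntCount_le_one_of_blocked (hG : G.deg ≤ 2) {i : Fin G.deg} (hx : Blocked (G.comp i) x)
    (h : ReflTransGen G.TStep x (w.map Sum.inr)) : ntCount x ≤ 1 := by
  obtain rfl | ⟨y, ⟨j, ⟨r, hr, x₁, x₂, rfl, rfl⟩, hy⟩, hyw⟩ := ReflTransGen.cases_head h
  · simp
  have hij : i ≠ j := by
    rintro rfl
    exact hx r.1 ⟨r.2, hr⟩ (by simp)
  have hcover (k : Fin G.deg) : k = i ∨ k = j := by lia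
  have hrest : ntCount (x₁ ++ x₂) = 0 := by
    refine ntCount_eq_zero_iff_forall_notMem.2 fun A hA => ?_
    rw [List.mem_append] at hA
    have hAy : Sum.inl A ∈ x₁ ++ r.2 ++ x₂ := by
      simp only [List.mem_append]
      tauto
    have hdead (k : Fin G.deg) : A ∉ dom (G.comp k) := by
      intro hk
      obtain rfl | rfl := hcover k
      · exact hx A hk (by simp only [List.mem_append, List.mem_cons]; tauto)
      · exact hy A hk hAy
    exact inl_notMem_of_forall_notMem_dom hdead hyw hAy
  simp only [ntCount_append, ntCount_inl_cons] at hrest ⊢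
  lia

open Classical in
/-- The context-free grammar collecting the rules whose right-hand side blocks the component they
come from; these are the only rules usable in successful derivations in mode `t ∧ =1`. -/
noncomputable def blockingCFG (G : CDGS T) : CFG T where
  start := G.start
  rules := (List.finRange G.deg).flatMap fun i =>
    (G.comp i).filter fun r => Blocked (G.comp i) r.2

theorem mem_rules_blockingCFG_iff {r : Rule T} :
    r ∈ G.blockingCFG.rules ↔ ∃ i, r ∈ G.comp i ∧ Blocked (G.comp i) r.2 := by
  simp [blockingCFG]

theorem TStep.rStep_blockingCFG (h : G.TStep x y) : RStep G.blockingCFG.rules x y := by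
  obtain ⟨i, ⟨r, hr, x₁, x₂, rfl, rfl⟩, hy⟩ := h
  rw [blocked_append, blocked_append] at hy
  exact ⟨r, mem_rules_blockingCFG_iff.2 ⟨i, hr, hy.1.2⟩, x₁, x₂, rfl, rfl⟩

theorem tStep_of_rStep_blockingCFG (hx : ntCount x ≤ 1) (h : RStep G.blockingCFG.rules x y) :
    G.TStep x y := by
  obtain ⟨r, hr, x₁, x₂, rfl, rfl⟩ := h
  obtain ⟨i, hr, hblocked⟩ := mem_rules_blockingCFG_iff.1 hr
  simp only [ntCount_append, ntCount_inl_cons] at hx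
  obtain ⟨u, rfl⟩ := ntCount_eq_zero_iff.1 (show ntCount x₁ = 0 by lia)
  obtain ⟨v, rfl⟩ := ntCount_eq_zero_iff.1 (show ntCount x₂ = 0 by lia)
  refine ⟨i, ⟨r, hr, _, _, rfl, rfl⟩, ?_⟩
  exact blocked_append.2 ⟨blocked_append.2 ⟨blocked_map_inr _ u, hblocked⟩, blocked_map_inr _ v⟩

theorem reflTransGen_boundedStep_of_reflTransGen_tStep (hG : G.deg ≤ 2)
    (h : ReflTransGen G.TStep x (w.map Sum.inr)) :
    ReflTransGen (BoundedStep G.blockingCFG.rules 1) x (w.map Sum.inr) := by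
  induction h using ReflTransGen.head_induction_on with
  | refl => exact .refl
  | head hxy hyw ih =>
    have ⟨_, _, hy⟩ := hxy
    exact ih.head ⟨hxy.rStep_blockingCFG, ntCount_le_one_of_blocked hG hy hyw⟩

theorem reflTransGen_tStep_of_reflTransGen_boundedStep (hx : ntCount x ≤ 1)
    (h : ReflTransGen (BoundedStep G.blockingCFG.rules 1) x y) : ReflTransGen G.TStep x y := by
  induction h with
  | refl => exact .refl
  | tail hxy hyz ih =>
    exact ih.tail
      (tStep_of_rStep_blockingCFG (ntCount_le_of_reflTransGen_boundedStep hx hxy) hyz.1)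

theorem lang_eq_langB_one_blockingCFG {d : ℕ → Mode} (hd : d = Mode.le ∨ d = Mode.eq)
    (hG : G.deg ≤ 2) : G.lang (Mode.conj Mode.t (d 1)) = G.blockingCFG.langB 1 := by
  ext w
  rw [mem_lang_iff_reflTransGen_tStep hd, CFG.mem_langB_iff le_rfl]
  exact ⟨reflTransGen_boundedStep_of_reflTransGen_tStep hG,
    reflTransGen_tStep_of_reflTransGen_boundedStep le_rfl⟩

end CDGS

/-! ### Simulating a linear grammar by two components -/

/-- The sentential form `x` with all its nonterminals `A` replaced by their copies of color `c`,
encoded as `Nat.pair c A`. -/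
def color (c : Fin 2) (x : SForm T) : SForm T := x.map (Sum.map (Nat.pair c) id)

theorem color_injective (c : Fin 2) : Function.Injective (color c : SForm T → SForm T) := by
  refine List.map_injective_iff.2 (Sum.map_injective.2 ⟨fun A B h => ?_, Function.injective_id⟩)
  exact (Nat.pair_eq_pair.1 h).2

theorem color_map_inr (c : Fin 2) (w : List T) : color c (w.map Sum.inr) = w.map Sum.inr := by
  simp [color]

theorem color_linForm (c : Fin 2) (u : List T) (A : ℕ) (v : List T) :
    color c (linForm u A v) = linForm u (Nat.pair c A) v := by
  simp [color, linForm, Function.comp_def]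

theorem ntCount_color (c : Fin 2) (x : SForm T) : ntCount (color c x) = ntCount x := by
  simp [ntCount, color, List.filter_map, Function.comp_def]

theorem color_eq_map_inr_iff {c : Fin 2} : color c x = w.map Sum.inr ↔ x = w.map Sum.inr := by
  rw [← color_map_inr c w, (color_injective c).eq_iff, color_map_inr]

theorem color_eq_linForm_iff {c : Fin 2} :
    color c x = linForm u A v ↔ ∃ B, A = Nat.pair c B ∧ x = linForm u B v := by
  constructor
  · intro h
    have hx : ntCount x = 1 := by rw [← ntCount_color c, h, ntCount_linForm]
    obtain ⟨u', B, v', rfl⟩ := ntCount_eq_one_iff.1 hx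
    rw [color_linForm] at h
    obtain ⟨hu, hA, hv⟩ := linForm_eq_append_cons_iff.1 h
    rw [Sum.inr_injective.list_map hu, Sum.inr_injective.list_map hv]
    exact ⟨B, hA.symm, rfl⟩
  · rintro ⟨B, rfl, rfl⟩
    exact color_linForm c u B v

namespace CFG

variable {G : CFG T}

/-- The system with two components in which component `c` rewrites a nonterminal of color `c` by
a rule of `G` with the right-hand side in the other color. -/
def alternating (G : CFG T) : CDGS T where
  deg := 2
  start := Nat.pair 0 G.start
  comp c := G.rules.map fun r => (Nat.pair c r.1, color c.rev r.2)

theorem lamFree_alternating (hG : ∀ r ∈ G.rules, r.2 ≠ []) : G.alternating.LamFree := by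
  intro c r hr
  obtain ⟨s, hs, rfl⟩ := List.mem_map.1 hr
  simpa [color] using hG s hs

theorem blocked_comp_alternating (G : CFG T) (c : Fin 2) (x : SForm T) :
    Blocked (G.alternating.comp c) (color c.rev x) := by
  rintro A ⟨z, hz⟩ hA
  obtain ⟨r, -, hr⟩ := List.mem_map.1 hz
  obtain ⟨B | a, -, hB⟩ := List.mem_map.1 hA
  · have hc : ((c.rev : Fin 2) : ℕ) = c := by
      rw [← (Prod.mk.inj hr).1] at hB
      exact (Nat.pair_eq_pair.1 (Sum.inl_injective hB)).1
    rw [Fin.val_rev] at hc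
    lia
  · exact Sum.inr_ne_inl hB

theorem mem_rules_blockingCFG_alternating_iff {r : Rule T} :
    r ∈ G.alternating.blockingCFG.rules ↔
      ∃ c : Fin 2, ∃ s ∈ G.rules, (Nat.pair c s.1, color c.rev s.2) = r := by
  rw [CDGS.mem_rules_blockingCFG_iff]
  refine exists_congr fun c => ⟨fun h => List.mem_map.1 h.1, ?_⟩
  rintro ⟨s, hs, rfl⟩
  exact ⟨List.mem_map.2 ⟨s, hs, rfl⟩, G.blocked_comp_alternating c s.2⟩

theorem pair_mem_rules_blockingCFG_alternating_iff {c : Fin 2} :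
    (Nat.pair c A, x) ∈ G.alternating.blockingCFG.rules ↔
      ∃ y, (A, y) ∈ G.rules ∧ color c.rev y = x := by
  rw [mem_rules_blockingCFG_alternating_iff]
  constructor
  · rintro ⟨c', ⟨B, y⟩, hs, h⟩
    obtain ⟨hpair, rfl⟩ := Prod.mk.inj h
    obtain ⟨hc, rfl⟩ := Nat.pair_eq_pair.1 hpair
    obtain rfl := Fin.ext hc
    exact ⟨y, hs, rfl⟩
  · rintro ⟨y, hy, rfl⟩
    exact ⟨c, (A, y), hy, rfl⟩

theorem linDerives_alternating_of_linDerives (h : LinDerives G.rules A w) (c : Fin 2) :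
    LinDerives G.alternating.blockingCFG.rules (Nat.pair c A) w := by
  induction h generalizing c with
  | terminal hr =>
    exact .terminal (pair_mem_rules_blockingCFG_alternating_iff.2 ⟨_, hr, color_map_inr _ _⟩)
  | linear hr _ ih =>
    exact .linear (pair_mem_rules_blockingCFG_alternating_iff.2 ⟨_, hr, color_linForm _ _ _ _⟩)
      (ih c.rev)

theorem linDerives_of_linDerives_alternating {c : Fin 2}
    (h : LinDerives G.alternating.blockingCFG.rules (Nat.pair c A) w) :
    LinDerives G.rules A w := by
  generalize hA : Nat.pair c A = A' at h
  induction h generalizing c A with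
  | terminal hr =>
    subst hA
    obtain ⟨y, hy, hyw⟩ := pair_mem_rules_blockingCFG_alternating_iff.1 hr
    rw [color_eq_map_inr_iff.1 hyw] at hy
    exact .terminal hy
  | linear hr _ ih =>
    subst hA
    obtain ⟨y, hy, hyz⟩ := pair_mem_rules_blockingCFG_alternating_iff.1 hr
    obtain ⟨B, rfl, rfl⟩ := color_eq_linForm_iff.1 hyz
    exact .linear hy (ih rfl)

theorem langB_one_blockingCFG_alternating (G : CFG T) :
    G.alternating.blockingCFG.langB 1 = G.langB 1 := by
  ext w
  rw [mem_langB_one_iff, mem_langB_one_iff]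
  exact ⟨linDerives_of_linDerives_alternating (c := 0),
    fun h => linDerives_alternating_of_linDerives h 0⟩

end CFG

theorem mem_cdFam_two_iff (lf : Bool) {d : ℕ → Mode} (hd : d = Mode.le ∨ d = Mode.eq)
    {L : Set (List T)} :
    L ∈ CDFam T lf 2 (Mode.conj Mode.t (d 1)) ↔ ∃ G : CFG T, EqL (G.langB 1) L := by
  constructor
  · rintro ⟨G, hG, -, hL⟩
    exact ⟨G.blockingCFG, CDGS.lang_eq_langB_one_blockingCFG hd hG ▸ hL⟩
  · rintro ⟨G, hL⟩
    refine ⟨G.lamFreePart.alternating, le_rfl, fun _ => ?_, ?_⟩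
    · exact CFG.lamFree_alternating fun r hr => (mem_lamFreeRules_iff.1 hr).2
    · rw [CDGS.lang_eq_langB_one_blockingCFG hd le_rfl, CFG.langB_one_blockingCFG_alternating,
        CFG.langB_one_lamFreePart]
      simpa only [EqL, sdiff_idem] using hL

end

theorem stmt1_general (T : Type) (lf : Bool) (d : ℕ → Mode) (hd : d = Mode.le ∨ d = Mode.eq) :
    LinFam T = CFFamInd T 1 ∧ CFFamInd T 1 = CDFam T lf 2 (Mode.conj Mode.t (d 1)) := by
  constructor
  · ext L
    rw [mem_linFam_iff, mem_cfFamInd_one_iff]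
  · ext L
    rw [mem_cfFamInd_one_iff, mem_cdFam_two_iff lf hd]

/-- For every Δ ∈ {≤, =}, L(LIN) = L_1(CF) = L(CD_2, CF[−λ], (t∧Δ1)),
both with and without erasing rules. -/
theorem stmt1 (lf : Bool) (d : ℕ → Mode) (hd : d = Mode.le ∨ d = Mode.eq) :
    LinFam ℕ = CFFamInd ℕ 1 ∧
    CFFamInd ℕ 1 = CDFam ℕ lf 2 (Mode.conj Mode.t (d 1)) := by
  exact stmt1_general ℕ lf d hd

end CDHybrid
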